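/- For all x, y ∈ L the following are equivalent: (1) x ≤ y in L; (2) {(x, 1_B)} ⊢ {(y, 1_B)}; (3) {(y, 0_B)} ⊢ {(x, 0_B)}. -/

import Mathlib

/-- An entailment relation on a set `S`: a relation between finite subsets of `S`
satisfying reflexivity (R), monotonicity (M) and transitivity/cut (T). -/
def IsEntailment {S : Type*} [DecidableEq S] (E : Finset S → Finset S → Prop) : Prop :=
  (∀ X Y : Finset S, (∃ x, x ∈ X ∧ x ∈ Y) → E X Y) ∧
  (∀ X X' Y Y' : Finset S, E X Y → E (X ∪ X') (Y ∪ Y')) ∧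
  (∀ X Y : Finset S, ∀ z : S, E X (insert z Y) → E (insert z X) Y → E X Y)

variable (M : Type*) (D : Type*) [Lattice M] [BoundedOrder M] [Lattice D] [BoundedOrder D]
  [Fintype D] [DecidableEq M] [DecidableEq D]

/-- The generating axioms (s), (∧), (∨), (0), (1), (t) for the entailment relation
of `D`-valued lattice maps on `M`. -/
def LatticeAxioms : Finset (M × D) → Finset (M × D) → Prop := fun X Y =>
  (∃ x a b, a ≠ b ∧ X = {(x, a), (x, b)} ∧ Y = ∅) ∨
  (∃ x y a b, X = {(x, a), (y, b)} ∧ Y = {(x ⊓ y, a ⊓ b)}) ∨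
  (∃ x y a b, X = {(x, a), (y, b)} ∧ Y = {(x ⊔ y, a ⊔ b)}) ∨
  (X = ∅ ∧ Y = {((⊥ : M), (⊥ : D))}) ∨
  (X = ∅ ∧ Y = {((⊤ : M), (⊤ : D))}) ∨
  (∃ x : M, X = ∅ ∧ Y = Finset.univ.image (fun a : D => (x, a)))

/-- The least entailment relation on `M × D` containing all the generating axioms:
the entailment relation of `D`-valued lattice maps on `M`. -/
def LatticeEntails (X Y : Finset (M × D)) : Prop :=
  ∀ E : Finset (M × D) → Finset (M × D) → Prop,
    IsEntailment E → (∀ X' Y', LatticeAxioms M D X' Y' → E X' Y') → E X Y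

/-!
If `x ≤ y`, the value `c` of `y`, which exists by totality, satisfies `c = c ⊔ a` as soon as `x` has
value `a`, because `y = y ⊔ x`; for `a = ⊤` this forces `c = ⊤`. The statement for `⊥` is dual.
Conversely, the graph of a bounded lattice homomorphism is a model of the least entailment relation,
and if `x ≰ y`, a prime ideal containing `y` but not `x` gives a homomorphism sending `x` to `⊤` and
`y` to `⊥`. This refutes both entailments when `⊥ ≠ ⊤`.
-/

namespace IsEntailment

variable {S : Type*} [DecidableEq S] {E : Finset S → Finset S → Prop} {X X' Y Y' : Finset S}

theorem mono (hE : IsEntailment E) (hX : X ⊆ X') (hY : Y ⊆ Y') (h : E X Y) : E X' Y' := by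
  simpa only [Finset.union_eq_right.2 hX, Finset.union_eq_right.2 hY] using hE.2.1 X X' Y Y' h

theorem cut_finset (hE : IsEntailment E) (Z : Finset S) (hZ : E X (Z ∪ Y))
    (h : ∀ z ∈ Z, E (insert z X) Y) : E X Y := by
  induction Z using Finset.induction_on with
  | empty => simpa only [Finset.empty_union] using hZ
  | insert z Z _ ih =>
    refine ih (hE.2.2 X (Z ∪ Y) z ?_ ?_) fun w hw => h w (Finset.mem_insert_of_mem hw)
    · simpa only [Finset.insert_union] using hZ
    · exact hE.mono subset_rfl Finset.subset_union_right (h z (Finset.mem_insert_self z Z))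

end IsEntailment

/-- A subset `P` of `S` validates the sequent `X ⊢ Y` of finite subsets of `S`, read as
`⋀ X → ⋁ Y`: if `P` contains all of `X`, then it contains some element of `Y`. The subsets
validating every sequent of an entailment relation are its models. -/
def Validates {S : Type*} (P : Set S) (X Y : Finset S) : Prop :=
  (∀ p ∈ X, p ∈ P) → ∃ q ∈ Y, q ∈ P

theorem isEntailment_validates {S : Type*} [DecidableEq S] (P : Set S) :
    IsEntailment (Validates P) := by
  refine ⟨fun X Y ⟨x, hxX, hxY⟩ hX => ⟨x, hxY, hX x hxX⟩, fun X X' Y Y' h hX => ?_,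
    fun X Y z hz h hX => ?_⟩
  · obtain ⟨q, hqY, hq⟩ := h fun p hp => hX p (Finset.mem_union_left X' hp)
    exact ⟨q, Finset.mem_union_left Y' hqY, hq⟩
  · obtain ⟨q, hqY, hq⟩ := hz hX
    obtain rfl | hqY := Finset.mem_insert.1 hqY
    · exact h (Finset.forall_mem_insert .. |>.2 ⟨hq, hX⟩)
    · exact ⟨q, hqY, hq⟩

namespace LatticeEntails

variable {M D} {x y : M} {X Y : Finset (M × D)}

theorem of_latticeAxioms (h : LatticeAxioms M D X Y) : LatticeEntails M D X Y :=
  fun _ _ hA => hA X Y h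

theorem isEntailment : IsEntailment (LatticeEntails M D) :=
  ⟨fun X Y h _ hE _ => hE.1 X Y h,
    fun X X' Y Y' h E hE hA => hE.2.1 X X' Y Y' (h E hE hA),
    fun X Y z h₁ h₂ E hE hA => hE.2.2 X Y z (h₁ E hE hA) (h₂ E hE hA)⟩

theorem inf (x y : M) (a b : D) : LatticeEntails M D {(x, a), (y, b)} {(x ⊓ y, a ⊓ b)} :=
  of_latticeAxioms (.inr (.inl ⟨x, y, a, b, rfl, rfl⟩))

theorem sup (x y : M) (a b : D) : LatticeEntails M D {(x, a), (y, b)} {(x ⊔ y, a ⊔ b)} :=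
  of_latticeAxioms (.inr (.inr (.inl ⟨x, y, a, b, rfl, rfl⟩)))

theorem total (x : M) : LatticeEntails M D ∅ (Finset.univ.image fun c => (x, c)) :=
  of_latticeAxioms (.inr (.inr (.inr (.inr (.inr ⟨x, rfl, rfl⟩)))))

theorem of_forall_insert (x : M) (h : ∀ c, LatticeEntails M D (insert (x, c) X) Y) :
    LatticeEntails M D X Y :=
  isEntailment.cut_finset (Finset.univ.image fun c => (x, c))
    (isEntailment.mono (Finset.empty_subset X) Finset.subset_union_left (total x))
    (Finset.forall_mem_image.2 fun c _ => h c)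

theorem image_sup_of_le (hxy : x ≤ y) (a : D) :
    LatticeEntails M D {(x, a)} (Finset.univ.image fun c => (y, c ⊔ a)) := by
  refine of_forall_insert y fun c => isEntailment.mono subset_rfl ?_ (sup y x c a)
  rw [sup_of_le_left hxy, Finset.singleton_subset_iff]
  exact Finset.mem_image_of_mem _ (Finset.mem_univ c)

theorem image_inf_of_le (hxy : x ≤ y) (b : D) :
    LatticeEntails M D {(y, b)} (Finset.univ.image fun c => (x, c ⊓ b)) := by
  refine of_forall_insert x fun c => isEntailment.mono subset_rfl ?_ (inf x y c b)
  rw [inf_of_le_left hxy, Finset.singleton_subset_iff]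
  exact Finset.mem_image_of_mem _ (Finset.mem_univ c)

theorem top_of_le (hxy : x ≤ y) : LatticeEntails M D {(x, ⊤)} {(y, ⊤)} := by
  simpa only [sup_top_eq, Finset.image_const Finset.univ_nonempty] using
    image_sup_of_le (D := D) hxy ⊤

theorem bot_of_le (hxy : x ≤ y) : LatticeEntails M D {(y, ⊥)} {(x, ⊥)} := by
  simpa only [inf_bot_eq, Finset.image_const Finset.univ_nonempty] using
    image_inf_of_le (D := D) hxy ⊥

end LatticeEntails

section Models

variable {M D} {X Y : Finset (M × D)}

theorem LatticeAxioms.validates_graph (h : LatticeAxioms M D X Y) (f : BoundedLatticeHom M D) :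
    Validates {p | f p.1 = p.2} X Y := by
  obtain ⟨x, a, b, hab, rfl, rfl⟩ | ⟨x, y, a, b, rfl, rfl⟩ | ⟨x, y, a, b, rfl, rfl⟩ |
    ⟨rfl, rfl⟩ | ⟨rfl, rfl⟩ | ⟨x, rfl, rfl⟩ := h <;> intro hX
  · have hxa : f x = a := hX (x, a) (by simp)
    have hxb : f x = b := hX (x, b) (by simp)
    exact absurd (hxa.symm.trans hxb) hab
  · have hxa : f x = a := hX (x, a) (by simp)
    have hyb : f y = b := hX (y, b) (by simp)
    exact ⟨_, Finset.mem_singleton_self _, by simp [hxa, hyb]⟩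
  · have hxa : f x = a := hX (x, a) (by simp)
    have hyb : f y = b := hX (y, b) (by simp)
    exact ⟨_, Finset.mem_singleton_self _, by simp [hxa, hyb]⟩
  · exact ⟨_, Finset.mem_singleton_self _, map_bot f⟩
  · exact ⟨_, Finset.mem_singleton_self _, map_top f⟩
  · exact ⟨(x, f x), Finset.mem_image_of_mem _ (Finset.mem_univ (f x)), rfl⟩

theorem LatticeEntails.validates_graph (h : LatticeEntails M D X Y) (f : BoundedLatticeHom M D) :
    Validates {p | f p.1 = p.2} X Y :=
  h _ (isEntailment_validates _) fun _ _ hA => hA.validates_graph f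

theorem LatticeEntails.map_eq_of_map_eq {x y : M} {a b : D}
    (h : LatticeEntails M D {(x, a)} {(y, b)}) (f : BoundedLatticeHom M D) (hx : f x = a) :
    f y = b := by
  simpa [Validates, hx] using h.validates_graph f

end Models

open Classical in
/-- The bounded lattice homomorphism to any bounded lattice `D` that sends a prime ideal `J` to `⊥`
and its complement to `⊤`; it turns prime ideals into models of the entailment relation. -/
noncomputable def homOfPrimeIdeal {L : Type*} (D : Type*) [Lattice L] [BoundedOrder L] [Lattice D]
    [BoundedOrder D] (J : Order.Ideal L) (hJ : J.IsPrime) : BoundedLatticeHom L D where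
  toFun z := if z ∈ J then ⊥ else ⊤
  map_sup' a b := by
    by_cases ha : a ∈ J <;> by_cases hb : b ∈ J <;> simp [Order.Ideal.sup_mem_iff, ha, hb]
  map_inf' a b := by
    have inf_mem_iff : a ⊓ b ∈ J ↔ a ∈ J ∨ b ∈ J :=
      ⟨hJ.mem_or_mem, fun h => h.elim (J.lower inf_le_left) (J.lower inf_le_right)⟩
    by_cases ha : a ∈ J <;> by_cases hb : b ∈ J <;> simp [inf_mem_iff, ha, hb]
  map_top' := if_neg hJ.toIsProper.top_notMem
  map_bot' := if_pos J.bot_mem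

theorem exists_isPrime_notMem_mem_of_not_le {L : Type*} [DistribLattice L] {x y : L}
    (hxy : ¬x ≤ y) : ∃ J : Order.Ideal L, J.IsPrime ∧ x ∉ J ∧ y ∈ J := by
  have disj : Disjoint (Order.PFilter.principal x : Set L) (Order.Ideal.principal y) :=
    Set.disjoint_left.2 fun _ hxz hzy => hxy (le_trans hxz hzy)
  obtain ⟨J, hJ, hyJ, hxJ⟩ := DistribLattice.prime_ideal_of_disjoint_filter_ideal disj
  exact ⟨J, hJ, Set.disjoint_left.1 hxJ (Order.PFilter.mem_principal.2 le_rfl),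
    Order.Ideal.principal_le_iff.1 hyJ⟩

theorem exists_boundedLatticeHom_of_not_le {L : Type*} (D : Type*) [DistribLattice L]
    [BoundedOrder L] [Lattice D] [BoundedOrder D] {x y : L} (hxy : ¬x ≤ y) :
    ∃ f : BoundedLatticeHom L D, f x = ⊤ ∧ f y = ⊥ := by
  obtain ⟨J, hJ, hx, hy⟩ := exists_isPrime_notMem_mem_of_not_le hxy
  exact ⟨homOfPrimeIdeal D J hJ, if_neg hx, if_pos hy⟩

theorem stmt10_general {L D : Type*} [DistribLattice L] [BoundedOrder L] [Lattice D]
    [BoundedOrder D] [Fintype D] [Nontrivial D] [DecidableEq L] [DecidableEq D] (x y : L) :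
    (x ≤ y ↔ LatticeEntails L D {(x, (⊤ : D))} {(y, (⊤ : D))}) ∧
    (x ≤ y ↔ LatticeEntails L D {(y, (⊥ : D))} {(x, (⊥ : D))}) := by
  refine ⟨⟨LatticeEntails.top_of_le, fun h => ?_⟩, ⟨LatticeEntails.bot_of_le, fun h => ?_⟩⟩ <;>
    by_contra hxy <;>
    obtain ⟨f, hx, hy⟩ := exists_boundedLatticeHom_of_not_le D hxy
  · exact bot_ne_top (hy.symm.trans (h.map_eq_of_map_eq f hx))
  · exact bot_ne_top ((h.map_eq_of_map_eq f hy).symm.trans hx)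

theorem stmt10 {L B : Type*} [DistribLattice L] [BoundedOrder L] [BooleanAlgebra B]
    [Fintype B] [Nontrivial B] [DecidableEq L] [DecidableEq B] (x y : L) :
    (x ≤ y ↔ LatticeEntails L B {(x, (⊤ : B))} {(y, (⊤ : B))}) ∧
    (x ≤ y ↔ LatticeEntails L B {(y, (⊥ : B))} {(x, (⊥ : B))}) :=
  stmt10_general x y
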